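/- (Ascent step for k = 3) In the Cholesky setting, set I₁ = θ³ − θθ₂θ₁ − θ₁θ₂θ and I₂ = −θ³ + θθ₁θ₂ + θ₂θ₁θ. Then (1/2)Tr(𝛉³𝚯) + ∂̄( (1/2)Tr(θ₁³θ₂ + θ₁θ₂³ + (1/2)(θ₁θ₂)²) ) = ∂( (1/2)Tr(θ³θ̄ + I₁θ̄₁ + I₂θ̄₂) ). -/

import Mathlib

/-- An abstract model of the Dolbeault double complex of `(p,q)`-forms on a complex
manifold: a bigraded associative `ℂ`-algebra `Ω = ⨁ Ω^{p,q}`, graded-commutative with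
respect to total degree, with `ℂ`-linear operators `∂` (`pd`) and `∂̄` (`pdb`) of
bidegrees `(1,0)` and `(0,1)`, squaring to zero and anticommuting, satisfying the
graded Leibniz rule. -/
structure DolbeaultAlgebra (Ω : Type*) [Ring Ω] [Algebra ℂ Ω] where
  /-- the `ℂ`-subspace of elements of bidegree `(p,q)` -/
  deg : ℕ → ℕ → Submodule ℂ Ω
  one_mem : (1 : Ω) ∈ deg 0 0
  mul_mem : ∀ {p q p' q'} {a b : Ω}, a ∈ deg p q → b ∈ deg p' q' →
    a * b ∈ deg (p + p') (q + q')
  gcomm : ∀ {p q p' q'} (a b : Ω), a ∈ deg p q → b ∈ deg p' q' →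
    a * b = ((-1 : ℂ) ^ ((p + q) * (p' + q'))) • (b * a)
  /-- the operator `∂` -/
  pd : Ω →ₗ[ℂ] Ω
  /-- the operator `∂̄` -/
  pdb : Ω →ₗ[ℂ] Ω
  pd_mem : ∀ {p q} {a : Ω}, a ∈ deg p q → pd a ∈ deg (p + 1) q
  pdb_mem : ∀ {p q} {a : Ω}, a ∈ deg p q → pdb a ∈ deg p (q + 1)
  pd_pd : ∀ a : Ω, pd (pd a) = 0
  pdb_pdb : ∀ a : Ω, pdb (pdb a) = 0
  pd_pdb : ∀ a : Ω, pd (pdb a) + pdb (pd a) = 0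
  pd_leibniz : ∀ {p q} (a b : Ω), a ∈ deg p q →
    pd (a * b) = pd a * b + ((-1 : ℂ) ^ (p + q)) • (a * pd b)
  pdb_leibniz : ∀ {p q} (a b : Ω), a ∈ deg p q →
    pdb (a * b) = pdb a * b + ((-1 : ℂ) ^ (p + q)) • (a * pdb b)

namespace DolbeaultAlgebra

variable {Ω : Type*} [Ring Ω] [Algebra ℂ Ω] {r : ℕ}

/-- the entrywise extension of `∂` to `r × r` matrices over `Ω` -/
def mpd (A : DolbeaultAlgebra Ω) (M : Matrix (Fin r) (Fin r) Ω) :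
    Matrix (Fin r) (Fin r) Ω := M.map A.pd

/-- the entrywise extension of `∂̄` to `r × r` matrices over `Ω` -/
def mpdb (A : DolbeaultAlgebra Ω) (M : Matrix (Fin r) (Fin r) Ω) :
    Matrix (Fin r) (Fin r) Ω := M.map A.pdb

/-- the assertion that all entries of a matrix lie in `Ω^{p,q}` -/
def MatDeg (A : DolbeaultAlgebra Ω) (p q : ℕ) (M : Matrix (Fin r) (Fin r) Ω) : Prop :=
  ∀ i j, M i j ∈ A.deg p q

end DolbeaultAlgebra

variable {Ω : Type*} [Ring Ω] [Algebra ℂ Ω]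

/-!
The pairs `(θ₁, θ̄₁)` and `(-θ₂, -θ̄₂)` are the components of the flat forms `dg g⁻¹` of `g = b` and
`g = c⁻¹`. If `(x, s)` is such a pair, then `∂x = x²` and `∂̄x + ∂s = xs + sx`, whence
`Tr(M ∂̄x) = ∂Tr(Ms) + Tr((Mx + xM - ∂M)s)` for every odd `M`. Two choices of `M` give the theorem:

* `M = θ³` for both pairs gives `Tr(𝛉³𝚯) = ∂Tr(θ³θ̄) - Tr(θ⁴θ̄)`;
* for `x = θ₁` and `M` the cyclic gradient of `Q = Tr(θ₁³θ₂ + θ₁θ₂³ + ½(θ₁θ₂)²)` in `θ₁`, one has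
  `Mx + xM - ∂M = θ⁴ - θ₁⁴`; together with its counterpart for `θ₂` this shows that `∂̄Q` is
  `Tr(θ⁴θ̄) - Tr(θ₁⁴θ̄₁) - Tr(θ₂⁴θ̄₂)` up to a `∂`-exact term.

Triangularity enters only at the end: the diagonal entries of `θ₁` and `θ₂` are odd, hence square to
zero, so `Tr(θᵢⁿθ̄ᵢ) = 0` for `n ≥ 2`.
-/

namespace DolbeaultAlgebra

variable {r : ℕ} {A : DolbeaultAlgebra Ω}

/-- The complex conjugate model, with bidegrees and operators exchanged. It transports facts about
`∂` to `∂̄`, since `A.conj.mpd` is `A.mpdb` by definition. -/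
def conj (A : DolbeaultAlgebra Ω) : DolbeaultAlgebra Ω where
  deg p q := A.deg q p
  one_mem := A.one_mem
  mul_mem := A.mul_mem
  gcomm {p q p' q'} a b ha hb := by
    simpa only [add_comm p, add_comm p'] using A.gcomm a b ha hb
  pd := A.pdb
  pdb := A.pd
  pd_mem := A.pdb_mem
  pdb_mem := A.pd_mem
  pd_pd := A.pdb_pdb
  pdb_pdb := A.pd_pd
  pd_pdb x := by rw [add_comm, A.pd_pdb]
  pd_leibniz {p q} a b ha := by simpa only [add_comm p] using A.pdb_leibniz a b ha
  pdb_leibniz {p q} a b ha := by simpa only [add_comm p] using A.pd_leibniz a b ha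

section Degree

variable {p q p' q' : ℕ} {M N : Matrix (Fin r) (Fin r) Ω}

theorem MatDeg.add (hM : A.MatDeg p q M) (hN : A.MatDeg p q N) : A.MatDeg p q (M + N) :=
  fun i j => add_mem (hM i j) (hN i j)

theorem MatDeg.neg (hM : A.MatDeg p q M) : A.MatDeg p q (-M) :=
  fun i j => neg_mem (hM i j)

theorem MatDeg.sub (hM : A.MatDeg p q M) (hN : A.MatDeg p q N) : A.MatDeg p q (M - N) :=
  fun i j => sub_mem (hM i j) (hN i j)

theorem MatDeg.mul (hM : A.MatDeg p q M) (hN : A.MatDeg p' q' N) :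
    A.MatDeg (p + p') (q + q') (M * N) :=
  fun i j => sum_mem (t := Finset.univ) fun k _ => A.mul_mem (hM i k) (hN k j)

theorem matDeg_one : A.MatDeg 0 0 (1 : Matrix (Fin r) (Fin r) Ω) :=
  (Matrix.diagonal_mem_matrix_iff (zero_mem (A.deg 0 0))).2 fun _ => A.one_mem

theorem MatDeg.pow (hM : A.MatDeg p q M) (n : ℕ) : A.MatDeg (n * p) (n * q) (M ^ n) := by
  induction n with
  | zero => simpa using matDeg_one
  | succ n ih => simpa only [pow_succ, Nat.succ_mul] using ih.mul hM

theorem MatDeg.mpd (hM : A.MatDeg p q M) : A.MatDeg (p + 1) q (A.mpd M) :=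
  fun i j => A.pd_mem (hM i j)

theorem MatDeg.mpdb (hM : A.MatDeg p q M) : A.MatDeg p (q + 1) (A.mpdb M) :=
  fun i j => A.pdb_mem (hM i j)

end Degree

section Differential

variable {p q : ℕ} {M N : Matrix (Fin r) (Fin r) Ω}

theorem mpd_add : A.mpd (M + N) = A.mpd M + A.mpd N := map_add A.pd.mapMatrix M N

theorem mpd_sub : A.mpd (M - N) = A.mpd M - A.mpd N := map_sub A.pd.mapMatrix M N

theorem mpd_neg : A.mpd (-M) = -A.mpd M := map_neg A.pd.mapMatrix M

theorem mpdb_add : A.mpdb (M + N) = A.mpdb M + A.mpdb N := A.conj.mpd_add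

theorem mpdb_neg : A.mpdb (-M) = -A.mpdb M := A.conj.mpd_neg

theorem mpd_mpd : A.mpd (A.mpd M) = 0 := by
  ext i j
  exact A.pd_pd (M i j)

theorem mpd_mpdb : A.mpd (A.mpdb M) = -A.mpdb (A.mpd M) := by
  ext i j
  exact eq_neg_of_add_eq_zero_left (A.pd_pdb (M i j))

theorem mpd_mul (hM : A.MatDeg p q M) :
    A.mpd (M * N) = A.mpd M * N + (-1 : ℂ) ^ (p + q) • (M * A.mpd N) := by
  ext i j
  simp only [mpd, Matrix.map_apply, Matrix.mul_apply, map_sum, Matrix.add_apply,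
    Matrix.smul_apply, Finset.smul_sum, ← Finset.sum_add_distrib]
  exact Finset.sum_congr rfl fun k _ => A.pd_leibniz _ _ (hM i k)

theorem mpd_mul_of_even (hM : A.MatDeg p q M) (h : Even (p + q)) :
    A.mpd (M * N) = A.mpd M * N + M * A.mpd N := by
  rw [mpd_mul hM, h.neg_one_pow, one_smul]

theorem mpd_mul_of_odd (hM : A.MatDeg p q M) (h : Odd (p + q)) :
    A.mpd (M * N) = A.mpd M * N - M * A.mpd N := by
  rw [mpd_mul hM, h.neg_one_pow, neg_one_smul, sub_eq_add_neg]

theorem mpdb_mul_of_even (hM : A.MatDeg p q M) (h : Even (p + q)) :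
    A.mpdb (M * N) = A.mpdb M * N + M * A.mpdb N :=
  A.conj.mpd_mul_of_even (p := q) (q := p) hM (add_comm p q ▸ h)

theorem mpdb_mul_of_odd (hM : A.MatDeg p q M) (h : Odd (p + q)) :
    A.mpdb (M * N) = A.mpdb M * N - M * A.mpdb N :=
  A.conj.mpd_mul_of_odd (p := q) (q := p) hM (add_comm p q ▸ h)

theorem mpd_one : A.mpd (1 : Matrix (Fin r) (Fin r) Ω) = 0 := by
  simpa using A.mpd_mul_of_even (N := 1) matDeg_one Even.zero

end Differential

section Trace

variable {p q p' q' : ℕ} {M N : Matrix (Fin r) (Fin r) Ω}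

theorem pd_trace : A.pd M.trace = (A.mpd M).trace := map_sum A.pd _ _

theorem pdb_trace : A.pdb M.trace = (A.mpdb M).trace := A.conj.pd_trace

theorem trace_mul_comm_of_even (hM : A.MatDeg p q M) (hN : A.MatDeg p' q' N)
    (h : Even ((p + q) * (p' + q'))) : (M * N).trace = (N * M).trace := by
  simp only [Matrix.trace, Matrix.diag_apply, Matrix.mul_apply]
  rw [Finset.sum_comm]
  refine Finset.sum_congr rfl fun i _ => Finset.sum_congr rfl fun j _ => ?_
  rw [A.gcomm _ _ (hM j i) (hN i j), h.neg_one_pow, one_smul]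

theorem pdb_trace_mul_four {x y z w : Matrix (Fin r) (Fin r) Ω} (hx : A.MatDeg 1 0 x)
    (hy : A.MatDeg 1 0 y) (hz : A.MatDeg 1 0 z) (hw : A.MatDeg 1 0 w) :
    A.pdb (x * y * z * w).trace =
      (y * z * w * A.mpdb x - z * w * x * A.mpdb y + w * x * y * A.mpdb z -
        x * y * z * A.mpdb w).trace := by
  have rotate₁ : (A.mpdb x * (y * z * w)).trace = (y * z * w * A.mpdb x).trace :=
    trace_mul_comm_of_even hx.mpdb ((hy.mul hz).mul hw) (by decide)
  have rotate₂ : (x * A.mpdb y * (z * w)).trace = (z * w * (x * A.mpdb y)).trace :=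
    trace_mul_comm_of_even (hx.mul hy.mpdb) (hz.mul hw) (by decide)
  have rotate₃ : (x * y * A.mpdb z * w).trace = (w * (x * y * A.mpdb z)).trace :=
    trace_mul_comm_of_even ((hx.mul hy).mul hz.mpdb) hw (by decide)
  rw [pdb_trace, mul_assoc, mul_assoc, mpdb_mul_of_odd hx odd_one, mpdb_mul_of_odd hy odd_one,
    mpdb_mul_of_odd hz odd_one]
  simp only [mul_sub, Matrix.trace_sub, Matrix.trace_add, mul_assoc] at rotate₁ rotate₂ rotate₃ ⊢
  rw [rotate₁, rotate₂, rotate₃]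
  abel

end Trace

section Triangular

variable {p q : ℕ} {M N : Matrix (Fin r) (Fin r) Ω} {α : Type*} [LinearOrder α] {f : Fin r → α}

theorem mul_self_eq_zero_of_odd {x : Ω} (hx : x ∈ A.deg p q) (h : Odd (p + q)) : x * x = 0 := by
  have anticomm : x * x = -(x * x) := by
    simpa [(h.mul h).neg_one_pow] using A.gcomm x x hx hx
  have double : (2 : ℂ) • (x * x) = 0 := by
    rw [two_smul]
    exact eq_neg_iff_add_eq_zero.1 anticomm
  exact (smul_eq_zero_iff_right two_ne_zero).1 double

/-- The algebra `Ω^{0,0}` of functions; its commutativity gives access to Mathlib's matrix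
inverses. -/
def functions (A : DolbeaultAlgebra Ω) : Subalgebra ℂ Ω :=
  (A.deg 0 0).toSubalgebra A.one_mem fun _ _ => A.mul_mem

instance : CommRing A.functions where
  mul_comm x y := Subtype.ext (by simpa using A.gcomm _ _ x.2 y.2)

theorem blockTriangular_of_mul_eq_one (hM : A.MatDeg 0 0 M) (hN : A.MatDeg 0 0 N)
    (h : M * N = 1) (hMf : M.BlockTriangular f) : N.BlockTriangular f := by
  let M₀ : Matrix (Fin r) (Fin r) A.functions := .of fun i j => ⟨M i j, hM i j⟩
  let N₀ : Matrix (Fin r) (Fin r) A.functions := .of fun i j => ⟨N i j, hN i j⟩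
  have mul_eq_one : M₀ * N₀ = 1 := by
    refine Matrix.map_injective (f := A.functions.val) Subtype.val_injective ?_
    beta_reduce
    rw [Matrix.map_mul, Matrix.map_one _ (map_zero _) (map_one _)]
    exact h
  have M₀_triangular : M₀.BlockTriangular f := fun i j hij => Subtype.ext (hMf hij)
  let _ : Invertible M₀ := ⟨N₀, mul_eq_one_comm.1 mul_eq_one, mul_eq_one⟩
  have N₀_triangular : N₀.BlockTriangular f :=
    Matrix.inv_eq_right_inv mul_eq_one ▸
      Matrix.blockTriangular_inv_of_blockTriangular M₀_triangular
  exact N₀_triangular.map A.functions.val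

theorem mul_apply_diag_of_blockTriangular {n R : Type*} [Fintype n] [NonUnitalNonAssocSemiring R]
    {f : n → α} (hf : f.Injective) {M N : Matrix n n R} (hM : M.BlockTriangular f)
    (hN : N.BlockTriangular f) (i : n) : (M * N) i i = M i i * N i i := by
  rw [Matrix.mul_apply]
  refine Finset.sum_eq_single i (fun k _ hki => ?_) (by simp)
  rcases (hf.ne hki).lt_or_gt with hlt | hgt
  · rw [hM hlt, zero_mul]
  · rw [hN hgt, mul_zero]

theorem trace_pow_mul_eq_zero (hf : f.Injective) (hM : M.BlockTriangular f)
    (hN : N.BlockTriangular f) (hMdeg : A.MatDeg p q M) (hodd : Odd (p + q)) {n : ℕ}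
    (hn : 2 ≤ n) : (M ^ n * N).trace = 0 := by
  obtain ⟨k, rfl⟩ := Nat.exists_eq_add_of_le hn
  refine Finset.sum_eq_zero fun i _ => ?_
  rw [Matrix.diag_apply, pow_add, mul_assoc, pow_two,
    mul_apply_diag_of_blockTriangular hf (hM.mul hM) ((hM.pow k).mul hN),
    mul_apply_diag_of_blockTriangular hf hM hM, mul_self_eq_zero_of_odd (hMdeg i i) hodd, zero_mul]

end Triangular

/-- The `(1,0)` and `(0,1)` components of a matrix-valued one-form `ω = x + s` satisfy the
`(2,0)` and `(1,1)` parts of the Maurer–Cartan equation `dω = ω²`. -/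
structure IsMaurerCartan (A : DolbeaultAlgebra Ω) (x s : Matrix (Fin r) (Fin r) Ω) : Prop where
  matDeg_left : A.MatDeg 1 0 x
  matDeg_right : A.MatDeg 0 1 s
  mpd_left : A.mpd x = x * x
  mpdb_left_add_mpd_right : A.mpdb x + A.mpd s = x * s + s * x

section Units

variable {p q : ℕ} {M : Matrix (Fin r) (Fin r) Ω} {g : (Matrix (Fin r) (Fin r) Ω)ˣ}

theorem mpd_units_inv_mul (hg' : A.MatDeg 0 0 g⁻¹.val) :
    A.mpd g⁻¹.val * g.val = -(g⁻¹.val * A.mpd g.val) := by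
  rw [eq_neg_iff_add_eq_zero, ← mpd_mul_of_even hg' Even.zero, g.inv_mul, mpd_one]

theorem mpd_units_inv (hg' : A.MatDeg 0 0 g⁻¹.val) :
    A.mpd g⁻¹.val = -(g⁻¹.val * A.mpd g.val * g⁻¹.val) := by
  rw [← neg_mul, ← mpd_units_inv_mul hg', mul_assoc, g.mul_inv, mul_one]

theorem mpdb_units_inv (hg' : A.MatDeg 0 0 g⁻¹.val) :
    A.mpdb g⁻¹.val = -(g⁻¹.val * A.mpdb g.val * g⁻¹.val) :=
  A.conj.mpd_units_inv hg'

theorem isMaurerCartan_mpd_mul_inv (hg : A.MatDeg 0 0 g.val) (hg' : A.MatDeg 0 0 g⁻¹.val) :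
    A.IsMaurerCartan (A.mpd g.val * g⁻¹.val) (A.mpdb g.val * g⁻¹.val) where
  matDeg_left := hg.mpd.mul hg'
  matDeg_right := hg.mpdb.mul hg'
  mpd_left := by
    rw [mpd_mul_of_odd hg.mpd odd_one, mpd_mpd, mpd_units_inv hg']
    noncomm_ring
  mpdb_left_add_mpd_right := by
    rw [mpdb_mul_of_odd hg.mpd odd_one, mpd_mul_of_odd hg.mpdb odd_one, mpd_mpdb,
      mpd_units_inv hg', mpdb_units_inv hg']
    noncomm_ring

theorem isMaurerCartan_neg_inv_mul_mpd (hg : A.MatDeg 0 0 g.val) (hg' : A.MatDeg 0 0 g⁻¹.val) :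
    A.IsMaurerCartan (-(g⁻¹.val * A.mpd g.val)) (-(g⁻¹.val * A.mpdb g.val)) := by
  have hmpdb : A.mpdb g⁻¹.val * g.val = -(g⁻¹.val * A.mpdb g.val) := A.conj.mpd_units_inv_mul hg'
  rw [← mpd_units_inv_mul hg', ← hmpdb]
  exact isMaurerCartan_mpd_mul_inv (g := g⁻¹) hg' hg

theorem mpdb_units_conj (hg' : A.MatDeg 0 0 g⁻¹.val) (hM : A.MatDeg p q M) (h : Odd (p + q)) :
    A.mpdb (g⁻¹.val * M * g.val) =
      g⁻¹.val * (A.mpdb M - A.mpdb g.val * g⁻¹.val * M - M * (A.mpdb g.val * g⁻¹.val)) * g.val := by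
  rw [mul_assoc, mpdb_mul_of_even hg' Even.zero, mpdb_mul_of_odd hM h, mpdb_units_inv hg']
  simp only [mul_sub, sub_mul, mul_assoc, g.inv_mul, mul_one]
  noncomm_ring

theorem trace_units_conj (hg : A.MatDeg 0 0 g.val) (hg' : A.MatDeg 0 0 g⁻¹.val)
    (hM : A.MatDeg p q M) : (g⁻¹.val * M * g.val).trace = M.trace := by
  rw [mul_assoc, trace_mul_comm_of_even hg' (hM.mul hg) (by simp), mul_assoc, g.mul_inv, mul_one]

theorem trace_pow_mul_mpdb_units_conj (hg : A.MatDeg 0 0 g.val) (hg' : A.MatDeg 0 0 g⁻¹.val)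
    (hM : A.MatDeg p q M) (h : Odd (p + q)) (n : ℕ) :
    ((g⁻¹.val * M * g.val) ^ n * A.mpdb (g⁻¹.val * M * g.val)).trace =
      (M ^ n * (A.mpdb M - A.mpdb g.val * g⁻¹.val * M - M * (A.mpdb g.val * g⁻¹.val))).trace := by
  have hs : A.MatDeg 0 1 (A.mpdb g.val * g⁻¹.val) := hg.mpdb.mul hg'
  have hsM : A.MatDeg p (q + 1) (A.mpdb g.val * g⁻¹.val * M) := by
    simpa only [zero_add, add_comm 1 q] using hs.mul hM
  have hcurv := (hM.mpdb.sub hsM).sub (hM.mul hs)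
  rw [Units.conj_pow', mpdb_units_conj hg' hM h, ← trace_units_conj hg hg' ((hM.pow n).mul hcurv)]
  simp only [mul_assoc, g.mul_inv_cancel_left]

theorem inv_mul_mpd_units_mul {b c : (Matrix (Fin r) (Fin r) Ω)ˣ} (hc : A.MatDeg 0 0 c.val) :
    (c * b)⁻¹.val * A.mpd (c * b).val =
      b⁻¹.val * (A.mpd b.val * b⁻¹.val + c⁻¹.val * A.mpd c.val) * b.val := by
  rw [mul_inv_rev, Units.val_mul, Units.val_mul, mpd_mul_of_even hc Even.zero]
  simp only [mul_add, add_mul, mul_assoc, b.inv_mul, mul_one, c.inv_mul_cancel_left]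
  rw [add_comm]

end Units

namespace IsMaurerCartan

variable {p q : ℕ} {M x s a b t : Matrix (Fin r) (Fin r) Ω}

theorem trace_mul_mpdb (h : A.IsMaurerCartan x s) (hM : A.MatDeg p q M) (hodd : Odd (p + q)) :
    (M * A.mpdb x).trace =
      A.pd (M * s).trace + ((M * x + x * M - A.mpd M) * s).trace := by
  have mpdb_eq : A.mpdb x = x * s + s * x - A.mpd s :=
    eq_sub_of_add_eq h.mpdb_left_add_mpd_right
  have rotate : (M * s * x).trace = (x * (M * s)).trace :=
    trace_mul_comm_of_even (hM.mul h.matDeg_right) h.matDeg_left (by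
      simpa [← add_assoc] using hodd.add_one)
  rw [pd_trace, mpd_mul_of_odd hM hodd, mpdb_eq]
  simp only [mul_sub, mul_add, sub_mul, add_mul, Matrix.trace_sub, Matrix.trace_add,
    ← mul_assoc] at rotate ⊢
  rw [rotate]
  abel

theorem mpd_of_neg (hb : A.IsMaurerCartan (-b) (-t)) : A.mpd b = -(b * b) := by
  rw [← neg_eq_iff_eq_neg, ← mpd_neg, hb.mpd_left, neg_mul_neg]

theorem matDeg_of_neg (hb : A.IsMaurerCartan (-b) (-t)) : A.MatDeg 1 0 b :=
  neg_neg b ▸ hb.matDeg_left.neg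

protected theorem neg_neg (ha : A.IsMaurerCartan a s) : A.IsMaurerCartan (- -a) (- -s) := by
  rwa [neg_neg, neg_neg]

theorem mpd_add_pow_odd (ha : A.IsMaurerCartan a s) (hb : A.IsMaurerCartan (-b) (-t)) (k : ℕ) :
    A.mpd ((a + b) ^ (2 * k + 1)) =
      (a + b) ^ (2 * k + 1) * a + a * (a + b) ^ (2 * k + 1) - (a + b) ^ (2 * k + 2) := by
  have mpd_θ : A.mpd (a + b) = (a + b) * a + a * (a + b) - (a + b) * (a + b) := by
    rw [mpd_add, ha.mpd_left, hb.mpd_of_neg]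
    noncomm_ring
  have hθ : A.MatDeg 1 0 (a + b) := ha.matDeg_left.add hb.matDeg_of_neg
  generalize a + b = θ at mpd_θ hθ ⊢
  induction k with
  | zero => simpa only [mul_zero, zero_add, pow_one, pow_two] using mpd_θ
  | succ k ih =>
    have pow_odd : θ ^ (2 * (k + 1) + 1) = θ * (θ * θ ^ (2 * k + 1)) := by
      rw [← pow_succ', ← pow_succ', mul_add_one, add_right_comm]
    have pow_even : θ ^ (2 * (k + 1) + 2) = θ * (θ * θ ^ (2 * k + 2)) := by
      rw [← pow_succ', ← pow_succ', mul_add_one, add_right_comm]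
    have pow_two_mul_add_two : θ ^ (2 * k + 2) = θ * θ ^ (2 * k + 1) := pow_succ' θ (2 * k + 1)
    rw [pow_odd, pow_even, mpd_mul_of_odd hθ odd_one, mpd_mul_of_odd hθ odd_one, ih, mpd_θ,
      pow_two_mul_add_two]
    noncomm_ring

theorem trace_add_pow_odd_mul_mpdb (ha : A.IsMaurerCartan a s) (hb : A.IsMaurerCartan (-b) (-t))
    (k : ℕ) :
    ((a + b) ^ (2 * k + 1) * A.mpdb a).trace =
      A.pd ((a + b) ^ (2 * k + 1) * s).trace + ((a + b) ^ (2 * k + 2) * s).trace := by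
  rw [ha.trace_mul_mpdb ((ha.matDeg_left.add hb.matDeg_of_neg).pow (2 * k + 1)) ⟨k, by ring⟩,
    mpd_add_pow_odd ha hb, sub_sub_cancel]

theorem trace_add_pow_odd_mul_curvature (ha : A.IsMaurerCartan a s)
    (hb : A.IsMaurerCartan (-b) (-t)) (k : ℕ) :
    ((a + b) ^ (2 * k + 1) * (A.mpdb (a + b) - s * (a + b) - (a + b) * s)).trace =
      A.pd ((a + b) ^ (2 * k + 1) * (s + t)).trace - ((a + b) ^ (2 * k + 2) * (s + t)).trace := by
  have trace_a := ha.trace_add_pow_odd_mul_mpdb hb k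
  have trace_b : ((a + b) ^ (2 * k + 1) * A.mpdb b).trace =
      A.pd ((a + b) ^ (2 * k + 1) * t).trace - ((a + b) ^ (2 * k + 2) * t).trace := by
    have h := hb.trace_add_pow_odd_mul_mpdb ha.neg_neg k
    have hodd : Odd (2 * k + 1) := ⟨k, rfl⟩
    rwa [← neg_add_rev, hodd.neg_pow, Even.neg_pow (n := 2 * k + 2) hodd.add_one, mpdb_neg,
      neg_mul_neg, neg_mul_neg, mul_neg, Matrix.trace_neg, ← sub_eq_add_neg] at h
  have hθ : A.MatDeg 1 0 (a + b) := ha.matDeg_left.add hb.matDeg_of_neg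
  have rotate :
      ((a + b) ^ (2 * k + 1) * s * (a + b)).trace = ((a + b) ^ (2 * k + 2) * s).trace := by
    rw [trace_mul_comm_of_even ((hθ.pow (2 * k + 1)).mul ha.matDeg_right) hθ ⟨k + 1, by ring⟩,
      ← mul_assoc, ← pow_succ']
  rw [mpdb_add, mul_sub, mul_sub, mul_add, ← mul_assoc, ← mul_assoc, ← pow_succ, Matrix.trace_sub,
    Matrix.trace_sub, Matrix.trace_add, trace_a, trace_b, rotate, mul_add _ s t, mul_add _ s t,
    Matrix.trace_add, Matrix.trace_add, map_add]
  abel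

end IsMaurerCartan

/-- The cyclic gradient in `a` of `Tr(a³b + ab³ + ½(ab)²)`; since this trace changes sign under the
exchange of the odd matrices `a` and `b`, its gradient in `b` is `-quarticGradient b a`. -/
def quarticGradient {R : Type*} [Ring R] (a b : R) : R :=
  a ^ 2 * b - a * b * a + b * a ^ 2 + b * a * b + b ^ 3

section Quartic

variable {a b s t : Matrix (Fin r) (Fin r) Ω}

theorem quarticGradient_neg_neg {R : Type*} [Ring R] (a b : R) :
    quarticGradient (-a) (-b) = -quarticGradient a b := by
  simp only [quarticGradient]
  noncomm_ring

theorem MatDeg.quarticGradient (ha : A.MatDeg 1 0 a) (hb : A.MatDeg 1 0 b) :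
    A.MatDeg 3 0 (quarticGradient a b) :=
  (((((ha.pow 2).mul hb).sub ((ha.mul hb).mul ha)).add (hb.mul (ha.pow 2))).add
    ((hb.mul ha).mul hb)).add (hb.pow 3)

theorem pdb_trace_quartic (ha : A.MatDeg 1 0 a) (hb : A.MatDeg 1 0 b) :
    A.pdb (a ^ 3 * b + a * b ^ 3 + (1 / 2 : ℂ) • (a * b) ^ 2).trace =
      (quarticGradient a b * A.mpdb a).trace - (quarticGradient b a * A.mpdb b).trace := by
  have pdb_aaab := pdb_trace_mul_four ha ha ha hb
  have pdb_abbb := pdb_trace_mul_four ha hb hb hb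
  have pdb_abab := pdb_trace_mul_four ha hb ha hb
  simp only [Matrix.trace_add, Matrix.trace_sub, Matrix.trace_smul, map_add, map_smul,
    quarticGradient, pow_succ, pow_zero, one_mul, add_mul, sub_mul,
    mul_assoc] at pdb_aaab pdb_abbb pdb_abab ⊢
  rw [pdb_aaab, pdb_abbb, pdb_abab]
  module

namespace IsMaurerCartan

theorem quarticGradient_anticommutator (ha : A.IsMaurerCartan a s)
    (hb : A.IsMaurerCartan (-b) (-t)) :
    quarticGradient a b * a + a * quarticGradient a b - A.mpd (quarticGradient a b) =
      (a + b) ^ 4 - a ^ 4 := by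
  have leibniz_a (N) := A.mpd_mul_of_odd (N := N) ha.matDeg_left odd_one
  have leibniz_b (N) := A.mpd_mul_of_odd (N := N) hb.matDeg_of_neg odd_one
  simp only [quarticGradient, pow_succ, pow_zero, one_mul, mul_assoc, mpd_add, mpd_sub, leibniz_a,
    leibniz_b, ha.mpd_left, hb.mpd_of_neg]
  noncomm_ring

theorem trace_quarticGradient_mul_mpdb (ha : A.IsMaurerCartan a s)
    (hb : A.IsMaurerCartan (-b) (-t)) :
    (quarticGradient a b * A.mpdb a).trace =
      A.pd (quarticGradient a b * s).trace + (((a + b) ^ 4 - a ^ 4) * s).trace := by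
  rw [ha.trace_mul_mpdb (ha.matDeg_left.quarticGradient hb.matDeg_of_neg) (by decide),
    ha.quarticGradient_anticommutator hb]

theorem pdb_trace_quartic (ha : A.IsMaurerCartan a s) (hb : A.IsMaurerCartan (-b) (-t)) :
    A.pdb (a ^ 3 * b + a * b ^ 3 + (1 / 2 : ℂ) • (a * b) ^ 2).trace =
      A.pd (quarticGradient a b * s - quarticGradient b a * t).trace +
        (((a + b) ^ 4 - a ^ 4) * s + ((a + b) ^ 4 - b ^ 4) * t).trace := by
  have trace_b : (quarticGradient b a * A.mpdb b).trace =
      A.pd (quarticGradient b a * t).trace - (((a + b) ^ 4 - b ^ 4) * t).trace := by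
    have h := hb.trace_quarticGradient_mul_mpdb ha.neg_neg
    have neg_add_pow : (-b + -a) ^ 4 = (a + b) ^ 4 := by
      rw [← neg_add_rev, Even.neg_pow (by decide)]
    rwa [quarticGradient_neg_neg, mpdb_neg, neg_mul_neg, neg_mul_neg, neg_add_pow,
      Even.neg_pow (by decide), mul_neg, Matrix.trace_neg, ← sub_eq_add_neg] at h
  rw [DolbeaultAlgebra.pdb_trace_quartic ha.matDeg_left hb.matDeg_of_neg,
    ha.trace_quarticGradient_mul_mpdb hb, trace_b, Matrix.trace_sub, map_sub, Matrix.trace_add]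
  abel

end IsMaurerCartan

end Quartic

end DolbeaultAlgebra

open DolbeaultAlgebra in
theorem stmt12_general (A : DolbeaultAlgebra Ω) {r : ℕ} {α β : Type*} [LinearOrder α]
    [LinearOrder β] {f : Fin r → α} {g : Fin r → β} (hf : f.Injective) (hg : g.Injective)
    (b c : (Matrix (Fin r) (Fin r) Ω)ˣ)
    (hb : A.MatDeg 0 0 b.val) (hc : A.MatDeg 0 0 c.val)
    (hb' : A.MatDeg 0 0 b⁻¹.val) (hc' : A.MatDeg 0 0 c⁻¹.val)
    (hbf : b.val.BlockTriangular f) (hcg : c.val.BlockTriangular g)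
    (θ₁ θ₂ θ θb₁ θb₂ θb Bθ : Matrix (Fin r) (Fin r) Ω)
    (hθ₁ : θ₁ = A.mpd b.val * b⁻¹.val) (hθ₂ : θ₂ = c⁻¹.val * A.mpd c.val) (hθ : θ = θ₁ + θ₂)
    (hθb₁ : θb₁ = A.mpdb b.val * b⁻¹.val) (hθb₂ : θb₂ = c⁻¹.val * A.mpdb c.val)
    (hθb : θb = θb₁ + θb₂) (hBθ : Bθ = (c * b)⁻¹.val * A.mpd (c * b).val)
    (I₁ I₂ : Matrix (Fin r) (Fin r) Ω)
    (hI₁ : I₁ = θ ^ 3 - θ * θ₂ * θ₁ - θ₁ * θ₂ * θ)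
    (hI₂ : I₂ = -θ ^ 3 + θ * θ₁ * θ₂ + θ₂ * θ₁ * θ) :
    (1 / 2 : ℂ) • Matrix.trace (Bθ ^ 3 * A.mpdb Bθ) +
      A.pdb ((1 / 2 : ℂ) • Matrix.trace
        (θ₁ ^ 3 * θ₂ + θ₁ * θ₂ ^ 3 + (1 / 2 : ℂ) • (θ₁ * θ₂) ^ 2)) =
    A.pd ((1 / 2 : ℂ) • Matrix.trace (θ ^ 3 * θb + I₁ * θb₁ + I₂ * θb₂)) := by
  have mc₁ : A.IsMaurerCartan θ₁ θb₁ := hθ₁ ▸ hθb₁ ▸ isMaurerCartan_mpd_mul_inv hb hb'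
  have mc₂ : A.IsMaurerCartan (-θ₂) (-θb₂) := hθ₂ ▸ hθb₂ ▸ isMaurerCartan_neg_inv_mul_mpd hc hc'
  have hb'f : b⁻¹.val.BlockTriangular f := blockTriangular_of_mul_eq_one hb hb' b.mul_inv hbf
  have hc'g : c⁻¹.val.BlockTriangular g := blockTriangular_of_mul_eq_one hc hc' c.mul_inv hcg
  have vanish₁ {n : ℕ} (hn : 2 ≤ n) : (θ₁ ^ n * θb₁).trace = 0 :=
    trace_pow_mul_eq_zero hf (hθ₁ ▸ (hbf.map A.pd).mul hb'f) (hθb₁ ▸ (hbf.map A.pdb).mul hb'f)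
      mc₁.matDeg_left odd_one hn
  have vanish₂ {n : ℕ} (hn : 2 ≤ n) : (θ₂ ^ n * θb₂).trace = 0 :=
    trace_pow_mul_eq_zero hg (hθ₂ ▸ hc'g.mul (hcg.map A.pd)) (hθb₂ ▸ hc'g.mul (hcg.map A.pdb))
      mc₂.matDeg_of_neg odd_one hn
  have curvature : (Bθ ^ 3 * A.mpdb Bθ).trace = A.pd (θ ^ 3 * θb).trace - (θ ^ 4 * θb).trace := by
    rw [hBθ, inv_mul_mpd_units_mul hc, ← hθ₁, ← hθ₂, trace_pow_mul_mpdb_units_conj hb hb'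
      (mc₁.matDeg_left.add mc₂.matDeg_of_neg) odd_one, ← hθb₁, hθ, hθb]
    exact mc₁.trace_add_pow_odd_mul_curvature mc₂ 1
  have transgression := mc₁.pdb_trace_quartic mc₂
  have I₁_eq : I₁ = θ₁ ^ 3 + quarticGradient θ₁ θ₂ := by
    rw [hI₁, hθ, quarticGradient]
    noncomm_ring
  have I₂_eq : I₂ = -(θ₂ ^ 3 + quarticGradient θ₂ θ₁) := by
    rw [hI₂, hθ, quarticGradient]
    noncomm_ring
  rw [map_smul, map_smul, curvature, transgression, I₁_eq, I₂_eq, ← hθ]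
  simp only [hθb, mul_add, add_mul, sub_mul, neg_mul, Matrix.trace_add, Matrix.trace_sub,
    Matrix.trace_neg, map_add, map_sub, map_neg, vanish₁ (n := 3) (by decide),
    vanish₁ (n := 4) (by decide), vanish₂ (n := 3) (by decide), vanish₂ (n := 4) (by decide)]
  module

/-- (Ascent step for `k = 3`) In the Cholesky setting, with
`I₁ = θ³ - θθ₂θ₁ - θ₁θ₂θ` and `I₂ = -θ³ + θθ₁θ₂ + θ₂θ₁θ`:
`(1/2)Tr(Bθ³BΘ) + ∂̄((1/2)Tr(θ₁³θ₂ + θ₁θ₂³ + (1/2)(θ₁θ₂)²))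
  = ∂((1/2)Tr(θ³θ̄ + I₁θ̄₁ + I₂θ̄₂))`. -/
theorem stmt12
    (A : DolbeaultAlgebra Ω) (r : ℕ) (hr : 1 ≤ r)
    (b c binv cinv : Matrix (Fin r) (Fin r) Ω)
    (hbdeg : A.MatDeg 0 0 b) (hcdeg : A.MatDeg 0 0 c)
    (hbinvdeg : A.MatDeg 0 0 binv) (hcinvdeg : A.MatDeg 0 0 cinv)
    (hbu : ∀ i j : Fin r, j < i → b i j = 0) (hbd : ∀ i : Fin r, b i i = 1)
    (hcl : ∀ i j : Fin r, i < j → c i j = 0)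
    (hbinvl : binv * b = 1) (hbinvr : b * binv = 1)
    (hcinvl : cinv * c = 1) (hcinvr : c * cinv = 1)
    (h hinv : Matrix (Fin r) (Fin r) Ω) (hh : h = c * b) (hhinv : hinv = binv * cinv)
    (θ₁ θ₂ θ θb₁ θb₂ θb : Matrix (Fin r) (Fin r) Ω)
    (hθ₁ : θ₁ = A.mpd b * binv) (hθ₂ : θ₂ = cinv * A.mpd c) (hθ : θ = θ₁ + θ₂)
    (hθb₁ : θb₁ = A.mpdb b * binv) (hθb₂ : θb₂ = cinv * A.mpdb c) (hθb : θb = θb₁ + θb₂)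
    (Bθ Bθb BΘ : Matrix (Fin r) (Fin r) Ω)
    (hBθ : Bθ = hinv * A.mpd h) (hBθb : Bθb = hinv * A.mpdb h) (hBΘ : BΘ = A.mpdb Bθ)
    (I₁ I₂ : Matrix (Fin r) (Fin r) Ω)
    (hI₁ : I₁ = θ ^ 3 - θ * θ₂ * θ₁ - θ₁ * θ₂ * θ)
    (hI₂ : I₂ = -θ ^ 3 + θ * θ₁ * θ₂ + θ₂ * θ₁ * θ) :
    (1 / 2 : ℂ) • Matrix.trace (Bθ ^ 3 * BΘ) +
      A.pdb ((1 / 2 : ℂ) • Matrix.trace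
        (θ₁ ^ 3 * θ₂ + θ₁ * θ₂ ^ 3 + (1 / 2 : ℂ) • (θ₁ * θ₂) ^ 2)) =
    A.pd ((1 / 2 : ℂ) • Matrix.trace (θ ^ 3 * θb + I₁ * θb₁ + I₂ * θb₂)) := by
  subst hh hhinv hBΘ
  exact stmt12_general A (f := id) (g := OrderDual.toDual) Function.injective_id
    OrderDual.toDual.injective ⟨b, binv, hbinvr, hbinvl⟩ ⟨c, cinv, hcinvr, hcinvl⟩ hbdeg hcdeg
    hbinvdeg hcinvdeg (fun i j => hbu i j) (fun i j => hcl i j) θ₁ θ₂ θ θb₁ θb₂ θb Bθ hθ₁ hθ₂ hθ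
    hθb₁ hθb₂ hθb hBθ I₁ I₂ hI₁ hI₂
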